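/- arXiv:2005.13057 — 2 statements merged into one kernel-verified Lean document; each statement's English description precedes it below -/
import Mathlib

section
/- If a well-formed configuration (σ₁ : θ₁ : s) takes a garbage-collection step, (σ₁ : θ₁ : s) ↦GC (σ₂ : θ₂ : s), then every location l ∈ dom(σ₁) ∪ dom(θ₁) with reach(l, s, σ₁, θ₁) also satisfies reach(l, s, σ₂, θ₂). -/
/-!
An abstract model of the Lua semantics with garbage collection of
Soldevila, Ziliani and Fridlender, "Understanding Lua's Garbage Collection".

`GCLang` packages the abstract syntactic data: types of value-store references,
table/closure identifiers, storable values, stored objects (tables and closures,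
including their contents, metatables and closure environments) and instruction
terms, together with the literal-occurrence predicates of locations in terms,
values and objects.
-/
structure GCLang where
  /-- references into the values store σ -/
  Ref : Type
  /-- identifiers (of tables and closures) into the objects store θ -/
  Id : Type
  /-- storable values -/
  Val : Type
  /-- stored objects: tables (contents + metatable) and closures -/
  Obj : Type
  /-- instruction terms (statements/expressions) -/
  Term : Type
  /-- `occT l t`: the location `l` occurs literally in the term `t` -/
  occT : Ref ⊕ Id → Term → Prop
  /-- `occV l v`: the location `l` occurs in the value `v` -/
  occV : Ref ⊕ Id → Val → Prop
  /-- `occO l o`: the location `l` occurs in the object `o`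
      (in a table's contents or metatable, or in a closure's environment) -/
  occO : Ref ⊕ Id → Obj → Prop

namespace GCLang

/-- Locations: value-store references or table/closure identifiers. -/
abbrev Loc (L : GCLang) : Type := L.Ref ⊕ L.Id

/-- A configuration σ : θ : s -/
structure Config (L : GCLang) where
  /-- values store -/
  σ : L.Ref → Option L.Val
  /-- objects store -/
  θ : L.Id → Option L.Obj
  /-- instruction term -/
  s : L.Term

/-- `Reach L t σ θ l`: the location `l` is reachable in the term `t` with stores
`σ`, `θ`: it occurs literally in `t`, or it is reachable from the value stored at
a reachable reference, or from the object (table contents, metatable or closure)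
stored at a reachable identifier. -/
inductive Reach (L : GCLang) (t : L.Term) (σ : L.Ref → Option L.Val)
    (θ : L.Id → Option L.Obj) : L.Loc → Prop
  | root {l : L.Loc} : L.occT l t → Reach L t σ θ l
  | ref {r : L.Ref} {v : L.Val} {l : L.Loc} :
      Reach L t σ θ (Sum.inl r) → σ r = some v → L.occV l v → Reach L t σ θ l
  | obj {i : L.Id} {o : L.Obj} {l : L.Loc} :
      Reach L t σ θ (Sum.inr i) → θ i = some o → L.occO l o → Reach L t σ θ l

/-- `l ∈ dom σ ∪ dom θ` of a configuration. -/
def memDom (L : GCLang) (c : L.Config) : L.Loc → Prop := fun l =>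
  match l with
  | Sum.inl r => c.σ r ≠ none
  | Sum.inr i => c.θ i ≠ none

/-- No dangling references: every location occurring in the term or in a stored
value/object belongs to the domain of the corresponding store. -/
def Closed (L : GCLang) (c : L.Config) : Prop :=
  (∀ l, L.occT l c.s → L.memDom c l) ∧
  (∀ r v, c.σ r = some v → ∀ l, L.occV l v → L.memDom c l) ∧
  (∀ i o, c.θ i = some o → ∀ l, L.occO l o → L.memDom c l)

/-- Well-formedness of a configuration: the instruction term is well formed
(an abstract predicate `WFTerm`) and there are no dangling references. -/
def WF (L : GCLang) (WFTerm : L.Term → Prop) (c : L.Config) : Prop :=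
  WFTerm c.s ∧ L.Closed c

/-- One half of ~rch: every reachable location in the domain of the stores of
`c₁` is reachable in `c₂` and is bound to the same value/object there. -/
def RchLe (L : GCLang) (c₁ c₂ : L.Config) : Prop :=
  (∀ r, c₁.σ r ≠ none → L.Reach c₁.s c₁.σ c₁.θ (Sum.inl r) →
    L.Reach c₂.s c₂.σ c₂.θ (Sum.inl r) ∧ c₁.σ r = c₂.σ r) ∧
  (∀ i, c₁.θ i ≠ none → L.Reach c₁.s c₁.σ c₁.θ (Sum.inr i) →
    L.Reach c₂.s c₂.σ c₂.θ (Sum.inr i) ∧ c₁.θ i = c₂.θ i)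

/-- `c₁ ~rch c₂`: the two configurations have the same instruction term and
coincide in the reachable portions of their stores. -/
def RchEq (L : GCLang) (c₁ c₂ : L.Config) : Prop :=
  c₁.s = c₂.s ∧ L.RchLe c₁ c₂ ∧ L.RchLe c₂ c₁

/-- The non-deterministic garbage-collection step ↦GC: the term is unchanged,
the resulting stores are restrictions of the original ones (σ = σ₁ ⊎ σ₂,
θ = θ₁ ⊎ θ₂), every removed binding is unreachable, and at least one of the
stores actually changes. -/
def GCStep (L : GCLang) (c c' : L.Config) : Prop :=
  c'.s = c.s ∧
  (∀ r, c'.σ r = c.σ r ∨ c'.σ r = none) ∧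
  (∀ i, c'.θ i = c.θ i ∨ c'.θ i = none) ∧
  (∀ r, c.σ r ≠ none → c'.σ r = none → ¬ L.Reach c.s c.σ c.θ (Sum.inl r)) ∧
  (∀ i, c.θ i ≠ none → c'.θ i = none → ¬ L.Reach c.s c.σ c.θ (Sum.inr i)) ∧
  (c'.σ ≠ c.σ ∨ c'.θ ≠ c.θ)

open Classical in
/-- The result of a final configuration: the final term (the evaluation context
around a top-level return stripped off by `resTerm`) together with the stores
restricted to the locations reachable from that final term. -/
noncomputable def result (L : GCLang) (resTerm : L.Term → L.Term)
    (c : L.Config) : L.Config where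
  σ := fun r => if L.Reach (resTerm c.s) c.σ c.θ (Sum.inl r) then c.σ r else none
  θ := fun i => if L.Reach (resTerm c.s) c.σ c.θ (Sum.inr i) then c.θ i else none
  s := resTerm c.s

/-- `c` converges under `step` to the final configuration `c'`. -/
def Converges (L : GCLang) (step : L.Config → L.Config → Prop)
    (FinalTerm : L.Term → Prop) (c c' : L.Config) : Prop :=
  Relation.ReflTransGen step c c' ∧ FinalTerm c'.s

/-- `c` diverges under `step`: there is an infinite trace from `c`. -/
def Diverges (L : GCLang) (step : L.Config → L.Config → Prop)
    (c : L.Config) : Prop :=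
  ∃ f : ℕ → L.Config, f 0 = c ∧ ∀ n, step (f n) (f (n + 1))

/-- Observations over a program: ⊥ (here `none`) if it diverges, and the
results of the final configurations of its convergent computations. -/
noncomputable def obs (L : GCLang) (step : L.Config → L.Config → Prop)
    (FinalTerm : L.Term → Prop) (resTerm : L.Term → L.Term)
    (c : L.Config) : Set (Option L.Config) :=
  {x | x = none ∧ L.Diverges step c} ∪
  {x | ∃ c', L.Converges step FinalTerm c c' ∧ x = some (L.result resTerm c')}

end GCLang

namespace GCLang

variable {L : GCLang}

theorem Reach.mono_of_reachable {t : L.Term} {σ σ' : L.Ref → Option L.Val}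
    {θ θ' : L.Id → Option L.Obj} {l : L.Loc}
    (hσ : ∀ r v, L.Reach t σ θ (Sum.inl r) → σ r = some v → σ' r = some v)
    (hθ : ∀ i o, L.Reach t σ θ (Sum.inr i) → θ i = some o → θ' i = some o)
    (hl : L.Reach t σ θ l) : L.Reach t σ' θ' l := by
  induction hl with
  | root hocc => exact .root hocc
  | ref hr hv hocc ih => exact .ref ih (hσ _ _ hr hv) hocc
  | obj hi ho hocc ih => exact .obj ih (hθ _ _ hi ho) hocc

namespace GCStep

variable {c c' : L.Config}

theorem σ_eq_of_reach (hgc : L.GCStep c c') {r : L.Ref}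
    (hr : L.Reach c.s c.σ c.θ (Sum.inl r)) : c'.σ r = c.σ r := by
  obtain ⟨-, hrestrict, -, hremoved, -, -⟩ := hgc
  rcases hrestrict r with hkept | hnone
  · exact hkept
  · have hunbound : c.σ r = none := by
      by_contra hbound
      exact hremoved r hbound hnone hr
    rw [hnone, hunbound]

theorem θ_eq_of_reach (hgc : L.GCStep c c') {i : L.Id}
    (hi : L.Reach c.s c.σ c.θ (Sum.inr i)) : c'.θ i = c.θ i := by
  obtain ⟨-, -, hrestrict, -, hremoved, -⟩ := hgc
  rcases hrestrict i with hkept | hnone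
  · exact hkept
  · have hunbound : c.θ i = none := by
      by_contra hbound
      exact hremoved i hbound hnone hi
    rw [hnone, hunbound]

end GCStep

end GCLang

theorem gcStep_preserves_reachability_general {L : GCLang} {c₁ c₂ : L.Config}
    (hgc : L.GCStep c₁ c₂) {l : L.Loc} (hl : L.Reach c₁.s c₁.σ c₁.θ l) :
    L.Reach c₁.s c₂.σ c₂.θ l :=
  hl.mono_of_reachable
    (fun _ _ hr hv => (hgc.σ_eq_of_reach hr).trans hv)
    (fun _ _ hi ho => (hgc.θ_eq_of_reach hi).trans ho)

/-- a GC step preserves reachability of all reachable locations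
in the domains of the stores (the instruction term is unchanged by GC). -/
theorem gcStep_preserves_reachability
    (L : GCLang) (WFTerm : L.Term → Prop)
    (c₁ c₂ : L.Config) (hwf : L.WF WFTerm c₁) (hgc : L.GCStep c₁ c₂) :
    ∀ l : L.Loc, L.memDom c₁ l →
      L.Reach c₁.s c₁.σ c₁.θ l → L.Reach c₁.s c₂.σ c₂.θ l :=
  fun _ _ hl => gcStep_preserves_reachability_general hgc hl
end

section
/- If (σ₁ : θ₁ : s) and (σ₂ : θ₂ : s) are well-formed configurations with (σ₁ : θ₁ : s) ↦GC (σ₂ : θ₂ : s), then (σ₁ : θ₁ : s) ~rch (σ₂ : θ₂ : s), i.e., a GC step produces a configuration that coincides with the original in the reachable portion of the stores. -/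
/-!
Suppose two configurations share their term and their stores agree at every location reachable in
both. Walking along a path from the term to a location reachable in one of them, each location on
the path is reachable in both, so its contents agree and the next edge of the path exists in both.
Hence the same locations are reachable, and the configurations are related by `~rch`. A collection
step meets the hypothesis because it erases only bindings of locations unreachable before the step.
-/

namespace GCLang

variable {L : GCLang} {c₁ c₂ : L.Config}

/-- The reachable references of a configuration, bound or not: the set on which values stores
are compared. -/
def reachableRefs (c : L.Config) : Set L.Ref := {r | L.Reach c.s c.σ c.θ (Sum.inl r)}

/-- The reachable table and closure identifiers of a configuration, bound or not: the set on
which objects stores are compared. -/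
def reachableIds (c : L.Config) : Set L.Id := {i | L.Reach c.s c.σ c.θ (Sum.inr i)}

theorem Reach.of_eqOn_inter {l : L.Loc} (hs : c₁.s = c₂.s)
    (hσ : Set.EqOn c₁.σ c₂.σ (reachableRefs c₁ ∩ reachableRefs c₂))
    (hθ : Set.EqOn c₁.θ c₂.θ (reachableIds c₁ ∩ reachableIds c₂))
    (hl : L.Reach c₁.s c₁.σ c₁.θ l) : L.Reach c₂.s c₂.σ c₂.θ l := by
  induction hl with
  | root hocc => exact .root (hs ▸ hocc)
  | ref hr₁ hv hocc hr₂ => exact .ref hr₂ ((hσ ⟨hr₁, hr₂⟩).symm.trans hv) hocc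
  | obj hi₁ ho hocc hi₂ => exact .obj hi₂ ((hθ ⟨hi₁, hi₂⟩).symm.trans ho) hocc

theorem rchLe_of_eqOn_inter (hs : c₁.s = c₂.s)
    (hσ : Set.EqOn c₁.σ c₂.σ (reachableRefs c₁ ∩ reachableRefs c₂))
    (hθ : Set.EqOn c₁.θ c₂.θ (reachableIds c₁ ∩ reachableIds c₂)) :
    L.RchLe c₁ c₂ := by
  constructor
  · intro r _ hr₁
    have hr₂ : r ∈ reachableRefs c₂ := Reach.of_eqOn_inter hs hσ hθ hr₁
    exact ⟨hr₂, hσ ⟨hr₁, hr₂⟩⟩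
  · intro i _ hi₁
    have hi₂ : i ∈ reachableIds c₂ := Reach.of_eqOn_inter hs hσ hθ hi₁
    exact ⟨hi₂, hθ ⟨hi₁, hi₂⟩⟩

theorem rchEq_of_eqOn_inter (hs : c₁.s = c₂.s)
    (hσ : Set.EqOn c₁.σ c₂.σ (reachableRefs c₁ ∩ reachableRefs c₂))
    (hθ : Set.EqOn c₁.θ c₂.θ (reachableIds c₁ ∩ reachableIds c₂)) :
    L.RchEq c₁ c₂ :=
  ⟨hs, rchLe_of_eqOn_inter hs hσ hθ,
    rchLe_of_eqOn_inter hs.symm (Set.inter_comm _ _ ▸ hσ.symm) (Set.inter_comm _ _ ▸ hθ.symm)⟩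

theorem eqOn_of_eq_or_eq_none {α β : Type*} {f g : α → Option β} {s : Set α}
    (hg : ∀ a, g a = f a ∨ g a = none) (hs : ∀ a, f a ≠ none → g a = none → a ∉ s) :
    Set.EqOn f g s := by
  intro a ha
  rcases hg a with heq | hnone
  · exact heq.symm
  · have hf : f a = none := by_contra fun hf => hs a hf hnone ha
    exact hf.trans hnone.symm

theorem GCStep.eqOn_σ (hgc : L.GCStep c₁ c₂) : Set.EqOn c₁.σ c₂.σ (reachableRefs c₁) :=
  let ⟨_, hrestrict, _, hremoved, _⟩ := hgc
  eqOn_of_eq_or_eq_none hrestrict hremoved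

theorem GCStep.eqOn_θ (hgc : L.GCStep c₁ c₂) : Set.EqOn c₁.θ c₂.θ (reachableIds c₁) :=
  let ⟨_, _, hrestrict, _, hremoved, _⟩ := hgc
  eqOn_of_eq_or_eq_none hrestrict hremoved

end GCLang

theorem gcStep_rchEq_general (L : GCLang) (c₁ c₂ : L.Config) (hgc : L.GCStep c₁ c₂) :
    L.RchEq c₁ c₂ :=
  GCLang.rchEq_of_eqOn_inter hgc.1.symm
    (hgc.eqOn_σ.mono Set.inter_subset_left) (hgc.eqOn_θ.mono Set.inter_subset_left)

/-- a GC step produces a configuration that coincides with the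
original in the reachable portion of the stores. -/
theorem gcStep_rchEq
    (L : GCLang) (WFTerm : L.Term → Prop)
    (c₁ c₂ : L.Config)
    (hwf₁ : L.WF WFTerm c₁) (hwf₂ : L.WF WFTerm c₂)
    (hgc : L.GCStep c₁ c₂) :
    L.RchEq c₁ c₂ :=
  gcStep_rchEq_general L c₁ c₂ hgc
end
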